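/- Let n ≥ 4, let L be a Cartan type Lie superalgebra over ℂ (one of W(n), S(n), S̃(n) for n even, or H(n) for n > 4) with its ℤ-grading, let f ∈ BDer(L) be a homogeneous super-biderivation, and let φ_f, ψ_f : L → L' be linear maps with f(x,y) = [φ_f(x), y] = [x, ψ_f(y)] for all x, y ∈ L. If φ_f vanishes on L_{−1} ⊕ L_0 ⊕ L_1 or ψ_f vanishes on L_{−1} ⊕ L_0 ⊕ L_1, then f is the zero map. -/

import Mathlib

open scoped BigOperators

noncomputable section

namespace CartanSuper

/-- Coordinates of the exterior algebra `Λ(n)` with respect to the monomial basis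
`{x_S : S ⊆ {1,…,n}}`. -/
abbrev Lambda (n : ℕ) := Finset (Fin n) → ℂ

/-- Endomorphism algebra of `Λ(n)`. -/
abbrev E (n : ℕ) := Module.End ℂ (Lambda n)

variable (n : ℕ)

/-- `(−1)^k`. -/
def msign (k : ℕ) : ℂ := (-1 : ℂ) ^ k

/-- The basis monomial `x_S = x_{i₁}⋯x_{i_k}` (indices in increasing order). -/
def mono (S : Finset (Fin n)) : Lambda n := fun T => if T = S then 1 else 0

/-- Number of inversions between `S` and `T`. -/
def inversions (S T : Finset (Fin n)) : ℕ := ((S ×ˢ T).filter fun p => p.2 < p.1).card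

/-- The multiplication of `Λ(n)` in coordinates:
`x_S · x_T = (−1)^{inversions} x_{S ∪ T}` for disjoint `S, T` and `0` otherwise. -/
def lmulFun (f g : Lambda n) : Lambda n :=
  fun U => ∑ S ∈ U.powerset, msign (inversions n S (U \ S)) * f S * g (U \ S)

/-- Left multiplication by an element of `Λ(n)`, as a linear map `Λ(n) →ₗ End Λ(n)`. -/
def mulOp : Lambda n →ₗ[ℂ] E n where
  toFun f :=
    { toFun := lmulFun n f
      map_add' := by
        intro g h; funext U
        simp [lmulFun, mul_add, Finset.sum_add_distrib]
      map_smul' := by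
        intro c g; funext U
        simp only [lmulFun, Pi.smul_apply, smul_eq_mul, RingHom.id_apply, Finset.mul_sum]
        exact Finset.sum_congr rfl (by intros; ring) }
  map_add' := by
    intro f g; apply LinearMap.ext; intro h; funext U
    show lmulFun n (f + g) h U = lmulFun n f h U + lmulFun n g h U
    simp only [lmulFun]
    rw [← Finset.sum_add_distrib]
    exact Finset.sum_congr rfl (by intros; simp [Pi.add_apply]; ring)
  map_smul' := by
    intro c f; apply LinearMap.ext; intro h; funext U
    show lmulFun n (c • f) h U = (c • lmulFun n f h) U
    simp only [lmulFun, Pi.smul_apply, smul_eq_mul, Finset.mul_sum]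
    exact Finset.sum_congr rfl (by intros; ring)

/-- The superderivation `∂_i` of `Λ(n)`, in coordinates. -/
def pd (i : Fin n) : E n where
  toFun f := fun S =>
    if i ∈ S then 0 else msign (S.filter (· < i)).card * f (insert i S)
  map_add' := by
    intro f g; funext S; by_cases h : i ∈ S <;> simp [h, mul_add]
  map_smul' := by
    intro c f; funext S; by_cases h : i ∈ S <;> simp [h] <;> ring

/-- The parity operator `σ` of `Λ(n)`: `σ(x_S) = (−1)^{|S|} x_S`. -/
def par : E n where
  toFun f := fun S => msign S.card * f S
  map_add' := by intro f g; funext S; simp [mul_add]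
  map_smul' := by intro c f; funext S; simp; ring

/-- The super-commutator `[D,F] = D∘F − (−1)^{|D||F|} F∘D`, extended bilinearly to all of
`End Λ(n)` using the parity operator `σ`
(for homogeneous `D`, `σ∘D∘σ = (−1)^{|D|} D`). -/
def sbFun (D F : E n) : E n :=
  D * F - (2:ℂ)⁻¹ • ((F + par n * F * par n) * D + (F - par n * F * par n) * (par n * D * par n))

/-- The super-commutator as a bilinear map. -/
def sbL : E n →ₗ[ℂ] E n →ₗ[ℂ] E n :=
  LinearMap.mk₂ ℂ (sbFun n)
    (fun D D' F => by
      simp only [sbFun, add_mul, sub_mul, mul_add, mul_sub, smul_mul_assoc, mul_smul_comm,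
        smul_add, smul_sub]
      module)
    (fun c D F => by
      simp only [sbFun, add_mul, sub_mul, mul_add, mul_sub, smul_mul_assoc, mul_smul_comm,
        smul_add, smul_sub]
      module)
    (fun D F F' => by
      simp only [sbFun, add_mul, sub_mul, mul_add, mul_sub, smul_mul_assoc, mul_smul_comm,
        smul_add, smul_sub]
      module)
    (fun c D F => by
      simp only [sbFun, add_mul, sub_mul, mul_add, mul_sub, smul_mul_assoc, mul_smul_comm,
        smul_add, smul_sub]
      module)

/-- Shorthand for the super-commutator. -/
def sb (D F : E n) : E n := sbL n D F

/-- The ℤ₂-homogeneous component of `Λ(n)` of parity `p`. -/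
def lpar (p : ZMod 2) : Submodule ℂ (Lambda n) where
  carrier := {f | ∀ S : Finset (Fin n), (S.card : ZMod 2) ≠ p → f S = 0}
  add_mem' := by intro f g hf hg S hS; simp [Pi.add_apply, hf S hS, hg S hS]
  zero_mem' := by intro S hS; rfl
  smul_mem' := by intro c f hf S hS; simp [Pi.smul_apply, hf S hS]

/-- The ℤ-homogeneous component of `Λ(n)` of degree `m` (zero unless `0 ≤ m ≤ n`). -/
def ldeg (m : ℤ) : Submodule ℂ (Lambda n) where
  carrier := {f | ∀ S : Finset (Fin n), (S.card : ℤ) ≠ m → f S = 0}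
  add_mem' := by intro f g hf hg S hS; simp [Pi.add_apply, hf S hS, hg S hS]
  zero_mem' := by intro S hS; rfl
  smul_mem' := by intro c f hf S hS; simp [Pi.smul_apply, hf S hS]

/-- Endomorphisms of `Λ(n)` that are ℤ₂-homogeneous of parity `p`. -/
def epar (p : ZMod 2) : Submodule ℂ (E n) where
  carrier := {D | ∀ (q : ZMod 2), ∀ f ∈ lpar n q, D f ∈ lpar n (q + p)}
  add_mem' := by
    intro D F hD hF q f hf
    simpa [LinearMap.add_apply] using (lpar n (q + p)).add_mem (hD q f hf) (hF q f hf)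
  zero_mem' := by intro q f hf; simpa using (lpar n (q + p)).zero_mem
  smul_mem' := by
    intro c D hD q f hf
    simpa [LinearMap.smul_apply] using (lpar n (q + p)).smul_mem c (hD q f hf)

/-- Endomorphisms of `Λ(n)` that are ℤ-homogeneous of degree `d`. -/
def edeg (d : ℤ) : Submodule ℂ (E n) where
  carrier := {D | ∀ (m : ℤ), ∀ f ∈ ldeg n m, D f ∈ ldeg n (m + d)}
  add_mem' := by
    intro D F hD hF m f hf
    simpa [LinearMap.add_apply] using (ldeg n (m + d)).add_mem (hD m f hf) (hF m f hf)
  zero_mem' := by intro m f hf; simpa using (ldeg n (m + d)).zero_mem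
  smul_mem' := by
    intro c D hD m f hf
    simpa [LinearMap.smul_apply] using (ldeg n (m + d)).smul_mem c (hD m f hf)

/-- The linear map `(f₁,…,f_n) ↦ ∑ᵢ fᵢ ∂ᵢ`. -/
def Wmap : (Fin n → Lambda n) →ₗ[ℂ] E n where
  toFun F := ∑ i, mulOp n (F i) * pd n i
  map_add' := by
    intro F G
    simp only [Pi.add_apply, map_add, add_mul, Finset.sum_add_distrib]
  map_smul' := by
    intro c F
    simp only [RingHom.id_apply, Pi.smul_apply, map_smul, smul_mul_assoc, Finset.smul_sum]

/-- The divergence `(f₁,…,f_n) ↦ ∑ᵢ ∂ᵢ(fᵢ)`. -/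
def divMap : (Fin n → Lambda n) →ₗ[ℂ] Lambda n where
  toFun F := ∑ i, pd n i (F i)
  map_add' := by
    intro F G
    simp only [Pi.add_apply, map_add, Finset.sum_add_distrib]
  map_smul' := by
    intro c F
    simp only [RingHom.id_apply, Pi.smul_apply, map_smul, Finset.smul_sum]

/-- The Witt type Lie superalgebra `W(n) = {∑ fᵢ∂ᵢ : fᵢ ∈ Λ(n)}`. -/
def Wn : Submodule ℂ (E n) := LinearMap.range (Wmap n)

/-- Divergence-free coefficient tuples. -/
def divFree : Submodule ℂ (Fin n → Lambda n) := LinearMap.ker (divMap n)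

/-- The special type Lie superalgebra `S(n) = {∑ fᵢ∂ᵢ : ∑ ∂ᵢ(fᵢ) = 0}`. -/
def Sn : Submodule ℂ (E n) := (divFree n).map (Wmap n)

/-- The top monomial `ω = x₁x₂⋯x_n`. -/
def omegaTop : Lambda n := mono n Finset.univ

/-- `1 − x₁x₂⋯x_n`. -/
def oneM : Lambda n := mono n ∅ - omegaTop n

/-- Multiplication of every coefficient by `1 − x₁⋯x_n`. -/
def oneMScale : (Fin n → Lambda n) →ₗ[ℂ] (Fin n → Lambda n) :=
  LinearMap.pi fun i => (mulOp n (oneM n)) ∘ₗ LinearMap.proj i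

/-- The Lie superalgebra `S̃(n) = {(1−x₁⋯x_n)∑ fᵢ∂ᵢ : ∑ ∂ᵢ(fᵢ) = 0}` (`n` even). -/
def Stn : Submodule ℂ (E n) := (divFree n).map (Wmap n ∘ₗ oneMScale n)

/-- The conjugate index `i'`. -/
def cidx (i : Fin n) : Fin n :=
  ⟨if i.val < n / 2 then i.val + n / 2 else if i.val < 2 * (n / 2) then i.val - n / 2 else i.val,
   by have := i.isLt; split_ifs <;> omega⟩

/-- The linear map `f ↦ D_H(f) = (−1)^{|f|} ∑ᵢ ∂ᵢ(f)∂_{i'}` (the sign is implemented by the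
parity operator `σ`, so that this is a single linear map agreeing with `D_H` on homogeneous
elements). -/
def DHmap : Lambda n →ₗ[ℂ] E n where
  toFun f := ∑ i, mulOp n (pd n i (par n f)) * pd n (cidx n i)
  map_add' := by
    intro f g
    simp only [map_add, add_mul, Finset.sum_add_distrib]
  map_smul' := by
    intro c f
    simp only [RingHom.id_apply, map_smul, smul_mul_assoc, Finset.smul_sum]

/-- Evaluation of the top coefficient. -/
def evalTop : Lambda n →ₗ[ℂ] ℂ := LinearMap.proj Finset.univ

/-- The Hamiltonian Lie superalgebra `H(n) = {D_H(f) : f ∈ ⊕_{i=0}^{n−1} Λ(n)_i}`. -/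
def Hn : Submodule ℂ (E n) := (LinearMap.ker (evalTop n)).map (DHmap n)

/-- `H̃(n) = {D_H(f) : f ∈ Λ(n)}`. -/
def HtN : Submodule ℂ (E n) := LinearMap.range (DHmap n)

/-- The degree derivation `𝒞 = ∑ᵢ xᵢ∂ᵢ`. -/
def CC : E n := ∑ i, mulOp n (mono n {i}) * pd n i

/-- The span of the diagonal elements `xᵢ∂ᵢ`. -/
def diagSpan : Submodule ℂ (E n) :=
  Submodule.span ℂ (Set.range fun i : Fin n => mulOp n (mono n {i}) * pd n i)

/-- The four families of Cartan type Lie superalgebras. -/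
inductive CT | W | S | St | H
deriving DecidableEq

/-- Validity of the parameter `n` for each family. -/
def CT.valid : CT → ℕ → Prop
  | .W, n => 4 ≤ n
  | .S, n => 4 ≤ n
  | .St, n => 4 ≤ n ∧ Even n
  | .H, n => 4 < n

/-- The Cartan type Lie superalgebra `L` itself. -/
def CT.algebra : CT → (n : ℕ) → Submodule ℂ (E n)
  | .W, n => Wn n
  | .S, n => Sn n
  | .St, n => Stn n
  | .H, n => Hn n

/-- The extended algebra `L'`: `L' = L` for `W(n)` and `S̃(n)`, `L' = S(n) ⊕ ℂ𝒞` for `S(n)`,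
and `L' = H̃(n) ⊕ ℂ𝒞` for `H(n)`. -/
def CT.prime : CT → (n : ℕ) → Submodule ℂ (E n)
  | .W, n => Wn n
  | .S, n => Sn n ⊔ Submodule.span ℂ {CC n}
  | .St, n => Stn n
  | .H, n => HtN n ⊔ Submodule.span ℂ {CC n}

/-- The top degree `ξ_L` of the ℤ-grading. -/
def CT.xi : CT → (n : ℕ) → ℤ
  | .W, n => (n : ℤ) - 1
  | .S, n => (n : ℤ) - 2
  | .St, n => (n : ℤ) - 2
  | .H, n => (n : ℤ) - 3

/-- The ℤ-grading component `L_j = L ∩ W(n)_j`; for `S̃(n)` the component of degree `−1`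
is `span{(1−x₁⋯x_n)∂ᵢ}` instead. -/
def CT.grade (t : CT) (n : ℕ) (j : ℤ) : Submodule ℂ (E n) :=
  match t with
  | .St =>
      if j = -1 then
        Submodule.span ℂ (Set.range fun i : Fin n => mulOp n (oneM n) * pd n i)
      else Stn n ⊓ edeg n j
  | t => t.algebra n ⊓ edeg n j

/-- The ℤ-grading component `L'_j` of the extended algebra `L'`. -/
def CT.grade' (t : CT) (n : ℕ) (j : ℤ) : Submodule ℂ (E n) :=
  match t with
  | .St => CT.grade .St n j
  | t => t.prime n ⊓ edeg n j

/-- The standard Cartan subalgebra `H_L` of `L`: the part of the diagonal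
`span{xᵢ∂ᵢ}` lying in `L`. -/
def CT.cartan (t : CT) (n : ℕ) : Submodule ℂ (E n) := t.algebra n ⊓ diagSpan n

/-- The weight space of `M ⊆ End Λ(n)` of weight `μ ∈ H_L^*` under the adjoint action
of the standard Cartan subalgebra of `L`. -/
def wtsp (t : CT) (n : ℕ) (M : Submodule ℂ (E n)) (μ : Module.Dual ℂ (t.cartan n)) :
    Submodule ℂ (E n) where
  carrier := {x | x ∈ M ∧ ∀ h : t.cartan n, sbL n h x = μ h • x}
  add_mem' := by
    rintro x y ⟨hx, hx'⟩ ⟨hy, hy'⟩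
    exact ⟨M.add_mem hx hy, fun h => by simp [map_add, hx' h, hy' h, smul_add]⟩
  zero_mem' := ⟨M.zero_mem, fun h => by simp⟩
  smul_mem' := by
    rintro c x ⟨hx, hx'⟩
    exact ⟨M.smul_mem c hx, fun h => by simp [map_smul, hx' h, smul_comm c]⟩

/-- The set of roots of `M` with respect to the standard Cartan subalgebra of `L`:
the nonzero weights with nonzero weight space. -/
def CT.roots (t : CT) (n : ℕ) (M : Submodule ℂ (E n)) : Set (Module.Dual ℂ (t.cartan n)) :=
  {ε | ε ≠ 0 ∧ wtsp t n M ε ≠ ⊥}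

/-- The sign `(−1)^p` for `p ∈ ℤ₂`. -/
def sgn (p : ZMod 2) : ℂ := (-1 : ℂ) ^ p.val

/-- `f` is a super-biderivation of `L` of ℤ₂-degree `pf`:
a bilinear map with `f(L_α, L_β) ⊆ L_{α+β+pf}` satisfying
`f([x,y],z) = (−1)^{|x||f|}[x,f(y,z)] + (−1)^{|y||z|}[f(x,z),y]` and
`f(x,[y,z]) = [f(x,y),z] + (−1)^{(|f|+|x|)|y|}[y,f(x,z)]` for homogeneous `x,y,z ∈ L`.
(The bilinear map is given as a bilinear map on the ambient space `End Λ(n)`;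
only its restriction to `L` is relevant.) -/
structure IsSuperBider (L : Submodule ℂ (E n)) (pf : ZMod 2)
    (f : E n →ₗ[ℂ] E n →ₗ[ℂ] E n) : Prop where
  maps : ∀ (α β : ZMod 2), ∀ x ∈ L ⊓ epar n α, ∀ y ∈ L ⊓ epar n β,
    f x y ∈ L ⊓ epar n (α + β + pf)
  eq1 : ∀ (α β γ : ZMod 2), ∀ x ∈ L ⊓ epar n α, ∀ y ∈ L ⊓ epar n β, ∀ z ∈ L ⊓ epar n γ,
    f (sbL n x y) z = sgn (α * pf) • sbL n x (f y z) + sgn (β * γ) • sbL n (f x z) y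
  eq2 : ∀ (α β γ : ZMod 2), ∀ x ∈ L ⊓ epar n α, ∀ y ∈ L ⊓ epar n β, ∀ z ∈ L ⊓ epar n γ,
    f x (sbL n y z) = sbL n (f x y) z + sgn ((pf + α) * β) • sbL n y (f x z)

/-- `D` is a superderivation of `L` of ℤ₂-degree `p`:
`D(L_α) ⊆ L_{α+p}` and `D([x,y]) = [D(x),y] + (−1)^{|D||x|}[x,D(y)]` for homogeneous
`x, y ∈ L`. (Given as a linear map on the ambient space `End Λ(n)`.) -/
structure IsSuperDer (L : Submodule ℂ (E n)) (p : ZMod 2)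
    (D : E n →ₗ[ℂ] E n) : Prop where
  maps : ∀ (α : ZMod 2), ∀ x ∈ L ⊓ epar n α, D x ∈ L ⊓ epar n (α + p)
  leib : ∀ (α β : ZMod 2), ∀ x ∈ L ⊓ epar n α, ∀ y ∈ L ⊓ epar n β,
    D (sbL n x y) = sbL n (D x) y + sgn (p * α) • sbL n x (D y)

/-- `f ∈ BDer(L)_ε`: the super-biderivation `f` has weight `ε ∈ H_L^*`, i.e.
`f(L_η, L_ζ) ⊆ L_{ε+η+ζ}` for all weights `η, ζ`. -/
def CT.HasWeight (t : CT) (n : ℕ) (f : E n →ₗ[ℂ] E n →ₗ[ℂ] E n)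
    (ε : Module.Dual ℂ (t.cartan n)) : Prop :=
  ∀ (η ζ : Module.Dual ℂ (t.cartan n)),
    ∀ x ∈ wtsp t n (t.algebra n) η, ∀ y ∈ wtsp t n (t.algebra n) ζ,
      f x y ∈ wtsp t n (t.algebra n) (ε + η + ζ)

/-- `f ∈ BDer(L)_i`: the super-biderivation `f` has ℤ-degree `i`, i.e.
`f(L_j, L_k) ⊆ L_{i+j+k}` for all `j, k ∈ ℤ`. -/
def CT.HasDeg (t : CT) (n : ℕ) (f : E n →ₗ[ℂ] E n →ₗ[ℂ] E n) (i : ℤ) : Prop :=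
  ∀ (j k : ℤ), ∀ x ∈ t.grade n j, ∀ y ∈ t.grade n k, f x y ∈ t.grade n (i + j + k)

/-!
If `φ` kills `L₋₁ ⊕ L₀`, then `[x, ψ y] = f(x, y) = [φ x, y] = 0` for all `x` in `L₋₁ ⊕ L₀`, so it
suffices that the centralizer of `L₋₁ ⊕ L₀` in `W(n)` is zero; the case of `ψ` is symmetric, since
supercommuting with a homogeneous element is a symmetric relation.

For the centralizer, `L₋₁` contains all `u∂ⱼ` for an even `u ∈ Λ(n)` with nonzero constant term
(`u = 1`, or `u = 1 - x₁⋯xₙ` for `S̃(n)`). Evaluating `[u∂ⱼ, D] = 0` at the generators `xᵢ` shows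
that `D = ∑ cᵢ∂ᵢ` with `cᵢ ∈ ℂ`. Moreover `L₀` contains, for each `j`, an operator mapping some
generator `xₖ` to a nonzero multiple of `xⱼ`; evaluating its bracket with `D` at `xₖ` gives
`cⱼ = 0`.
-/

section

variable {n}

/-! ### The exterior algebra in coordinates -/

theorem msign_ne_zero (k : ℕ) : msign k ≠ 0 := pow_ne_zero k (by norm_num)

theorem mono_apply (S T : Finset (Fin n)) : mono n S T = if T = S then 1 else 0 := rfl

theorem par_apply (f : Lambda n) (S : Finset (Fin n)) : par n f S = msign S.card * f S := rfl

theorem pd_apply (i : Fin n) (f : Lambda n) (S : Finset (Fin n)) :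
    pd n i f S = if i ∈ S then 0 else msign (S.filter (· < i)).card * f (insert i S) := rfl

theorem mulOp_apply (f g : Lambda n) (U : Finset (Fin n)) :
    mulOp n f g U = ∑ S ∈ U.powerset, msign (inversions n S (U \ S)) * f S * g (U \ S) := rfl

theorem pd_apply_empty (i : Fin n) (f : Lambda n) : pd n i f ∅ = f {i} := by
  simp [pd_apply, msign]

theorem mulOp_apply_empty (f g : Lambda n) : mulOp n f g ∅ = f ∅ * g ∅ := by
  simp [mulOp_apply, inversions, msign]

theorem linearMap_ext_mono {D F : E n} (h : ∀ S, D (mono n S) = F (mono n S)) : D = F := by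
  refine (Pi.basisFun ℂ (Finset (Fin n))).ext fun S => ?_
  have hS : Pi.basisFun ℂ (Finset (Fin n)) S = mono n S := by
    funext T
    rw [Pi.basisFun_apply, Pi.single_apply, mono_apply]
  rw [hS, h]

theorem pd_mono_insert {i : Fin n} {S : Finset (Fin n)} (hi : i ∉ S) :
    pd n i (mono n (insert i S)) = msign (S.filter (· < i)).card • mono n S := by
  funext T
  rw [pd_apply, Pi.smul_apply, smul_eq_mul, mono_apply, mono_apply]
  by_cases hT : T = S
  · simp [hT, hi]
  · by_cases hiT : i ∈ T
    · simp [hiT, hT]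
    · have : insert i T ≠ insert i S := fun h => hT <| by
        rw [← Finset.erase_insert hiT, h, Finset.erase_insert hi]
      simp [hT, this]

theorem pd_mono_of_notMem {i : Fin n} {S : Finset (Fin n)} (hi : i ∉ S) :
    pd n i (mono n S) = 0 := by
  funext T
  have : insert i T ≠ S := fun h => hi (h ▸ Finset.mem_insert_self i T)
  simp [pd_apply, mono_apply, this]

theorem pd_mono_singleton_self (i : Fin n) : pd n i (mono n {i}) = mono n ∅ := by
  simpa [msign] using pd_mono_insert (Finset.notMem_empty i)

theorem pd_mono_singleton_of_ne {i j : Fin n} (hij : i ≠ j) : pd n i (mono n {j}) = 0 :=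
  pd_mono_of_notMem (by simpa using hij)

theorem mulOp_mono_empty : mulOp n (mono n ∅) = 1 := by
  refine LinearMap.ext fun g => funext fun U => ?_
  rw [mulOp_apply, Finset.sum_eq_single ∅]
  · simp [mono_apply, inversions, msign]
  · intro S _ hS
    simp [mono_apply, hS]
  · simp

theorem mulOp_apply_mono_empty (f : Lambda n) : mulOp n f (mono n ∅) = f := by
  funext U
  rw [mulOp_apply, Finset.sum_eq_single U]
  · simp [mono_apply, inversions, msign]
  · intro S hS hSU
    have : ¬U ⊆ S := fun h => hSU ((Finset.mem_powerset.1 hS).antisymm h)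
    simp [mono_apply, Finset.sdiff_eq_empty_iff_subset, this]
  · simp

theorem mulOp_mono_mono_of_not_disjoint {S T : Finset (Fin n)} (h : ¬Disjoint S T) :
    mulOp n (mono n S) (mono n T) = 0 := by
  funext U
  refine Finset.sum_eq_zero fun R _ => ?_
  by_cases hR : R = S
  · have : U \ R ≠ T := by
      rintro rfl
      exact h (hR ▸ Finset.disjoint_sdiff)
    simp [mono_apply, this]
  · simp [mono_apply, hR]

theorem mulOp_injective {u : Lambda n} (hu : u ∅ ≠ 0) : Function.Injective (mulOp n u) := by
  rw [injective_iff_map_eq_zero]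
  intro g hg
  funext U
  induction U using Finset.strongInduction with
  | H U ih =>
    have hU : mulOp n u g U = u ∅ * g U := by
      rw [mulOp_apply, Finset.sum_eq_single ∅]
      · simp [inversions, msign]
      · intro S hS hS0
        have : U \ S ⊂ U :=
          Finset.sdiff_ssubset (Finset.mem_powerset.1 hS) (Finset.nonempty_iff_ne_empty.2 hS0)
        simp [ih _ this]
      · simp
    exact (mul_eq_zero.1 (hU.symm.trans (congrFun hg U))).resolve_left hu

theorem apply_eq_zero_of_pd_apply_erase {j : Fin n} {g : Lambda n} {S : Finset (Fin n)}
    (hj : j ∈ S) (h : pd n j g (S.erase j) = 0) : g S = 0 := by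
  rw [pd_apply, if_neg (Finset.notMem_erase j S), Finset.insert_erase hj] at h
  exact (mul_eq_zero.1 h).resolve_left (msign_ne_zero _)

theorem eq_smul_mono_empty_of_pd {i : Fin n} {g : Lambda n} (hne : ∀ j, j ≠ i → pd n j g = 0)
    (hi : pd n i g ∅ = 0) : g = g ∅ • mono n ∅ := by
  funext S
  rcases S.eq_empty_or_nonempty with rfl | hS
  · simp [mono_apply]
  suffices g S = 0 by simp [mono_apply, hS.ne_empty, this]
  by_cases hSi : S = {i}
  · rw [hSi, ← pd_apply_empty i g, hi]
  · obtain ⟨j, hjS, hji⟩ : ∃ j ∈ S, j ≠ i := by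
      contrapose! hSi
      exact Finset.eq_singleton_iff_nonempty_unique_mem.2 ⟨hS, hSi⟩
    exact apply_eq_zero_of_pd_apply_erase hjS (congrFun (hne j hji) _)

/-! ### Degree and parity -/

theorem mono_mem_ldeg (S : Finset (Fin n)) : mono n S ∈ ldeg n S.card := by
  intro T hT
  have : T ≠ S := by
    rintro rfl
    exact hT rfl
  simp [mono_apply, this]

theorem ldeg_le_lpar (m : ℤ) : ldeg n m ≤ lpar n (m : ZMod 2) := by
  intro f hf S hS
  refine hf S fun h => hS ?_
  rw [← h, Int.cast_natCast]

theorem pd_mem_edeg (i : Fin n) : pd n i ∈ edeg n (-1) := by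
  intro m f hf S hS
  by_cases hi : i ∈ S
  · simp [pd_apply, hi]
  · have : f (insert i S) = 0 := hf _ fun h => hS <| by
      rw [Finset.card_insert_of_notMem hi] at h
      push_cast at h
      omega
    simp [pd_apply, this]

theorem mulOp_mem_edeg {d : ℤ} {f : Lambda n} (hf : f ∈ ldeg n d) : mulOp n f ∈ edeg n d := by
  intro m g hg U hU
  refine Finset.sum_eq_zero fun S hS => ?_
  by_cases hSd : (S.card : ℤ) = d
  · have : g (U \ S) = 0 := hg _ fun h => hU <| by
      rw [← Finset.card_sdiff_add_card_eq_card (Finset.mem_powerset.1 hS)]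
      push_cast
      omega
    simp [this]
  · simp [hf S hSd]

theorem par_mem_edeg : par n ∈ edeg n 0 := by
  intro m f hf S hS
  rw [par_apply, hf S (by simpa using hS), mul_zero]

theorem mul_mem_edeg {a b : ℤ} {D F : E n} (hD : D ∈ edeg n a) (hF : F ∈ edeg n b) :
    D * F ∈ edeg n (a + b) := by
  intro m f hf
  rw [add_comm a, ← add_assoc]
  exact hD _ _ (hF m f hf)

theorem mul_mem_epar {p q : ZMod 2} {D F : E n} (hD : D ∈ epar n p) (hF : F ∈ epar n q) :
    D * F ∈ epar n (p + q) := by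
  intro r f hf
  rw [add_comm p, ← add_assoc]
  exact hD _ _ (hF r f hf)

theorem mono_mem_lpar (S : Finset (Fin n)) : mono n S ∈ lpar n S.card := by
  simpa using ldeg_le_lpar _ (mono_mem_ldeg S)

theorem lpar_le_of_mono_mem {p : ZMod 2} {M : Submodule ℂ (Lambda n)}
    (h : ∀ S : Finset (Fin n), (S.card : ZMod 2) = p → mono n S ∈ M) : lpar n p ≤ M := by
  intro f hf
  have hsum : f = ∑ S, f S • mono n S := by
    funext T
    simp [mono_apply]
  rw [hsum]
  refine Submodule.sum_mem _ fun S _ => ?_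
  by_cases hS : (S.card : ZMod 2) = p
  · exact M.smul_mem _ (h S hS)
  · simp [hf S hS]

theorem edeg_le_epar (d : ℤ) : edeg n d ≤ epar n (d : ZMod 2) := by
  intro D hD q
  refine lpar_le_of_mono_mem (M := (lpar n (q + d)).comap D) fun S hS => ?_
  have := ldeg_le_lpar _ (hD _ _ (mono_mem_ldeg S))
  rwa [Int.cast_add, Int.cast_natCast, hS] at this

theorem mulOp_mem_epar {p : ZMod 2} {f : Lambda n} (hf : f ∈ lpar n p) : mulOp n f ∈ epar n p := by
  refine lpar_le_of_mono_mem (M := (epar n p).comap (mulOp n)) (fun S hS => ?_) hf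
  have := edeg_le_epar _ (mulOp_mem_edeg (mono_mem_ldeg S))
  rwa [Int.cast_natCast, hS] at this

theorem msign_eq_sgn (k : ℕ) : msign k = sgn k := by
  rw [msign, sgn, ZMod.val_natCast, neg_one_pow_eq_pow_mod_two]

theorem sgn_add (p q : ZMod 2) : sgn (p + q) = sgn p * sgn q := by
  rw [← ZMod.natCast_zmod_val p, ← ZMod.natCast_zmod_val q, ← Nat.cast_add]
  simp only [← msign_eq_sgn, msign, pow_add]

theorem par_apply_of_mem_lpar {p : ZMod 2} {f : Lambda n} (hf : f ∈ lpar n p) :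
    par n f = sgn p • f := by
  funext S
  by_cases hS : (S.card : ZMod 2) = p
  · rw [par_apply, msign_eq_sgn, hS, Pi.smul_apply, smul_eq_mul]
  · simp [par_apply, hf S hS]

theorem par_mul_par : par n * par n = 1 := by
  refine LinearMap.ext fun f => funext fun S => ?_
  simp [par_apply, msign, ← mul_assoc, ← mul_pow]

theorem par_mul_of_mem_epar {p : ZMod 2} {D : E n} (hD : D ∈ epar n p) :
    par n * D = sgn p • (D * par n) := by
  refine linearMap_ext_mono fun S => ?_
  have hS := mono_mem_lpar S
  rw [Module.End.mul_apply, LinearMap.smul_apply, Module.End.mul_apply,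
    par_apply_of_mem_lpar hS, par_apply_of_mem_lpar (hD _ _ hS), map_smul, smul_smul, sgn_add,
    mul_comm]

theorem par_mul_mul_par_of_mem_epar {p : ZMod 2} {D : E n} (hD : D ∈ epar n p) :
    par n * D * par n = sgn p • D := by
  rw [par_mul_of_mem_epar hD, smul_mul_assoc, mul_assoc, par_mul_par, mul_one]

/-! ### The supercommutator -/

theorem sbL_apply (D F : E n) : sbL n D F = D * F - (2 : ℂ)⁻¹ • ((F + par n * F * par n) * D +
    (F - par n * F * par n) * (par n * D * par n)) := rfl

theorem sgn_zero : sgn 0 = 1 := by simp [sgn]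

theorem sgn_one : sgn 1 = -1 := by simp [sgn, ZMod.val_one]

theorem sbL_left_of_mem_epar_zero {x : E n} (hx : x ∈ epar n 0) (D : E n) :
    sbL n x D = x * D - D * x := by
  rw [sbL_apply, par_mul_mul_par_of_mem_epar hx, sgn_zero, one_smul, add_mul, sub_mul]
  module

theorem sbL_left_of_mem_epar_one {x : E n} (hx : x ∈ epar n 1) (D : E n) :
    sbL n x D = x * D - par n * D * par n * x := by
  rw [sbL_apply, par_mul_mul_par_of_mem_epar hx, sgn_one, mul_smul_comm, add_mul, sub_mul]
  module

theorem par_conj_mul (D F : E n) :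
    par n * (D * F) * par n = (par n * D * par n) * (par n * F * par n) :=
  calc par n * (D * F) * par n = par n * D * (1 * (F * par n)) := by
        simp only [one_mul, mul_assoc]
    _ = (par n * D * par n) * (par n * F * par n) := by
        rw [← par_mul_par]
        simp only [mul_assoc]

theorem par_conj_par_conj (D : E n) : par n * (par n * D * par n) * par n = D :=
  calc par n * (par n * D * par n) * par n = (par n * par n) * D * (par n * par n) := by
        simp only [mul_assoc]
    _ = D := by rw [par_mul_par, one_mul, mul_one]

theorem sbL_swap_of_mem_epar_zero {x : E n} (hx : x ∈ epar n 0) (D : E n) :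
    sbL n x D = -sbL n D x := by
  rw [sbL_left_of_mem_epar_zero hx, sbL_apply, par_mul_mul_par_of_mem_epar hx, sgn_zero, one_smul,
    add_mul, sub_mul]
  module

theorem sbL_swap_of_mem_epar_one {x : E n} (hx : x ∈ epar n 1) (D : E n) :
    sbL n x D = par n * sbL n D x * par n := by
  have hright : sbL n D x = D * x - x * (par n * D * par n) := by
    rw [sbL_apply, par_mul_mul_par_of_mem_epar hx, sgn_one, add_mul, sub_mul, smul_mul_assoc,
      smul_mul_assoc]
    module
  rw [sbL_left_of_mem_epar_one hx, hright, mul_sub, sub_mul, par_conj_mul, par_conj_mul,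
    par_conj_par_conj, par_mul_mul_par_of_mem_epar hx, sgn_one, mul_smul_comm, smul_mul_assoc]
  module

theorem sbL_eq_zero_of_swap {p : ZMod 2} {x D : E n} (hx : x ∈ epar n p)
    (h : sbL n D x = 0) : sbL n x D = 0 := by
  obtain rfl | rfl : p = 0 ∨ p = 1 := by
    clear hx
    revert p
    decide
  · rw [sbL_swap_of_mem_epar_zero hx, h, neg_zero]
  · rw [sbL_swap_of_mem_epar_one hx, h, mul_zero, zero_mul]

/-! ### Elements of `W(n)` -/

theorem Wmap_apply (F : Fin n → Lambda n) (g : Lambda n) :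
    Wmap n F g = ∑ i, mulOp n (F i) (pd n i g) := by
  change (∑ i, mulOp n (F i) * pd n i) g = _
  simp only [LinearMap.sum_apply, Module.End.mul_apply]

theorem Wmap_apply_mono_singleton (F : Fin n → Lambda n) (i : Fin n) :
    Wmap n F (mono n {i}) = F i := by
  rw [Wmap_apply, Finset.sum_eq_single i]
  · rw [pd_mono_singleton_self, mulOp_apply_mono_empty]
  · intro k _ hk
    rw [pd_mono_singleton_of_ne hk, map_zero]
  · simp

theorem apply_mono_empty_of_mem_Wn {D : E n} (hD : D ∈ Wn n) : D (mono n ∅) = 0 := by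
  obtain ⟨F, rfl⟩ := hD
  simp [Wmap_apply, pd_mono_of_notMem]

theorem apply_apply_empty_of_mem_Wn {D : E n} (hD : D ∈ Wn n) {u : Lambda n}
    (hu : ∀ k, u {k} = 0) : D u ∅ = 0 := by
  obtain ⟨F, rfl⟩ := hD
  simp [Wmap_apply, mulOp_apply_empty, pd_apply_empty, hu]

theorem eq_zero_of_mem_Wn {D : E n} (hD : D ∈ Wn n) (h : ∀ i, D (mono n {i}) = 0) : D = 0 := by
  obtain ⟨F, rfl⟩ := hD
  have hF : F = 0 := funext fun i => (Wmap_apply_mono_singleton F i).symm.trans (h i)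
  rw [hF, map_zero]

theorem apply_mono_singleton_of_sbL_eq_zero {u : Lambda n} (hu : u ∈ lpar n 0) (hu₀ : u ∅ ≠ 0)
    {D : E n} (hD : D ∈ Wn n) (h : ∀ j, sbL n (mulOp n u * pd n j) D = 0) (i : Fin n) :
    D (mono n {i}) = D (mono n {i}) ∅ • mono n ∅ := by
  have hodd (j : Fin n) : mulOp n u * pd n j ∈ epar n 1 := by
    simpa using mul_mem_epar (mulOp_mem_epar hu) (edeg_le_epar _ (pd_mem_edeg j))
  have key (j : Fin n) : mulOp n u (pd n j (D (mono n {i}))) =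
      par n (D (par n (mulOp n u (pd n j (mono n {i}))))) := by
    have := LinearMap.congr_fun (h j) (mono n {i})
    rw [sbL_left_of_mem_epar_one (hodd j)] at this
    exact sub_eq_zero.1 this
  refine eq_smul_mono_empty_of_pd (i := i) (fun j hj => mulOp_injective hu₀ ?_) ?_
  · rw [key, pd_mono_singleton_of_ne hj]
    simp only [map_zero]
  · have hlin : ∀ k, u {k} = 0 := fun k => hu _ (by simp)
    have hi := congrFun (key i) ∅
    rw [pd_mono_singleton_self, mulOp_apply_mono_empty, par_apply_of_mem_lpar hu, sgn_zero,
      one_smul, par_apply, apply_apply_empty_of_mem_Wn hD hlin, mul_zero, mulOp_apply_empty] at hi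
    exact (mul_eq_zero.1 hi).resolve_left hu₀

theorem apply_eq_zero_of_sbL_eq_zero {x D : E n} (hx : x ∈ Wn n) (hx₀ : x ∈ epar n 0)
    (h : sbL n x D = 0) {g : Lambda n} {c : ℂ} (hg : D g = c • mono n ∅) : D (x g) = 0 := by
  rw [sbL_left_of_mem_epar_zero hx₀] at h
  have hxg := LinearMap.congr_fun h g
  rw [LinearMap.sub_apply, Module.End.mul_apply, Module.End.mul_apply, hg, map_smul,
    apply_mono_empty_of_mem_Wn hx, smul_zero, zero_sub] at hxg
  exact neg_eq_zero.1 hxg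

/-! ### Membership in the Cartan type algebras and their graded pieces -/

theorem Wmap_single (i : Fin n) (f : Lambda n) :
    Wmap n (Pi.single i f) = mulOp n f * pd n i := by
  change ∑ k, mulOp n ((Pi.single i f : Fin n → Lambda n) k) * pd n k = _
  rw [Finset.sum_eq_single i]
  · rw [Pi.single_eq_same]
  · intro k _ hk
    rw [Pi.single_eq_of_ne hk, map_zero, zero_mul]
  · simp

theorem single_mem_divFree {i : Fin n} {f : Lambda n} (h : pd n i f = 0) :
    Pi.single i f ∈ divFree n := by
  change ∑ k, pd n k ((Pi.single i f : Fin n → Lambda n) k) = 0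
  refine Finset.sum_eq_zero fun k _ => ?_
  rcases eq_or_ne k i with rfl | hk
  · rw [Pi.single_eq_same, h]
  · rw [Pi.single_eq_of_ne hk, map_zero]

theorem mulOp_mul_pd_mem_Wn (f : Lambda n) (i : Fin n) : mulOp n f * pd n i ∈ Wn n :=
  ⟨_, Wmap_single i f⟩

theorem mulOp_mul_pd_mem_Sn {f : Lambda n} {i : Fin n} (h : pd n i f = 0) :
    mulOp n f * pd n i ∈ Sn n :=
  ⟨_, single_mem_divFree h, Wmap_single i f⟩

theorem mulOp_oneM_mul_pd_mem_Stn {f : Lambda n} {i : Fin n} (h : pd n i f = 0) :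
    mulOp n (mulOp n (oneM n) f) * pd n i ∈ Stn n := by
  refine ⟨_, single_mem_divFree h, ?_⟩
  have : oneMScale n (Pi.single i f) = Pi.single i (mulOp n (oneM n) f) :=
    funext fun k => Pi.apply_single (fun _ => mulOp n (oneM n)) (fun _ => map_zero _) i f k
  rw [LinearMap.comp_apply, this, Wmap_single]

theorem cidx_involutive : Function.Involutive (cidx n) := by
  intro i
  have := i.isLt
  apply Fin.ext
  simp only [cidx]
  split_ifs <;> omega

theorem DHmap_eq_sum (f : Lambda n) :
    DHmap n f = ∑ i, mulOp n (pd n i (par n f)) * pd n (cidx n i) := rfl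

theorem DHmap_mem_Wn (f : Lambda n) : DHmap n f ∈ Wn n := by
  rw [DHmap_eq_sum]
  exact Submodule.sum_mem _ fun _ _ => mulOp_mul_pd_mem_Wn _ _

theorem DHmap_mem_edeg {m : ℤ} {f : Lambda n} (hf : f ∈ ldeg n m) :
    DHmap n f ∈ edeg n (m - 2) := by
  rw [DHmap_eq_sum]
  refine Submodule.sum_mem _ fun i _ => ?_
  have h := mul_mem_edeg (mulOp_mem_edeg (pd_mem_edeg i _ _ (par_mem_edeg _ _ hf)))
    (pd_mem_edeg (cidx n i))
  rwa [show m + 0 + -1 + -1 = m - 2 by ring] at h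

theorem DHmap_apply_mono_singleton (f : Lambda n) (i : Fin n) :
    DHmap n f (mono n {cidx n i}) = pd n i (par n f) := by
  rw [DHmap_eq_sum, LinearMap.sum_apply, Finset.sum_eq_single i]
  · rw [Module.End.mul_apply, pd_mono_singleton_self, mulOp_apply_mono_empty]
  · intro k _ hk
    rw [Module.End.mul_apply, pd_mono_singleton_of_ne (cidx_involutive.injective.ne hk), map_zero]
  · simp

theorem DHmap_mono_mem_Hn {S : Finset (Fin n)} (hS : S ≠ Finset.univ) :
    DHmap n (mono n S) ∈ Hn n :=
  ⟨_, if_neg hS.symm, rfl⟩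

theorem DHmap_mono_singleton (i : Fin n) :
    DHmap n (mono n {i}) = (-1 : ℂ) • pd n (cidx n i) := by
  rw [DHmap_eq_sum, Finset.sum_eq_single i]
  · rw [par_apply_of_mem_lpar (mono_mem_lpar _), Finset.card_singleton, Nat.cast_one, sgn_one,
      map_smul, pd_mono_singleton_self, map_smul, mulOp_mono_empty, smul_mul_assoc, one_mul]
  · intro k _ hk
    rw [par_apply_of_mem_lpar (mono_mem_lpar _), map_smul, pd_mono_singleton_of_ne hk, smul_zero,
      map_zero, zero_mul]
  · simp

theorem ne_univ_of_card_lt {S : Finset (Fin n)} (hS : S.card < n) : S ≠ Finset.univ := by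
  rintro rfl
  simp at hS

theorem pd_mem_Hn (hn : 2 ≤ n) (i : Fin n) : pd n i ∈ Hn n := by
  have hS : ({cidx n i} : Finset (Fin n)).card < n := by rwa [Finset.card_singleton]
  have h := DHmap_mono_mem_Hn (ne_univ_of_card_lt hS)
  rw [DHmap_mono_singleton, cidx_involutive] at h
  exact (Submodule.smul_mem_iff _ (by norm_num)).1 h

theorem CC_mem_Wn : CC n ∈ Wn n := Submodule.sum_mem _ fun _ _ => mulOp_mul_pd_mem_Wn _ _

theorem CT.algebra_le_prime (t : CT) (n : ℕ) : t.algebra n ≤ t.prime n := by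
  cases t with
  | W => exact le_rfl
  | S => exact le_sup_left
  | St => exact le_rfl
  | H => exact le_sup_of_le_left LinearMap.map_le_range

theorem CT.prime_le_Wn (t : CT) (n : ℕ) : t.prime n ≤ Wn n := by
  have hCC : Submodule.span ℂ {CC n} ≤ Wn n := by
    rw [Submodule.span_singleton_le_iff_mem]
    exact CC_mem_Wn
  cases t with
  | W => exact le_rfl
  | S => exact sup_le LinearMap.map_le_range hCC
  | St =>
    rintro _ ⟨F, _, rfl⟩
    exact ⟨_, rfl⟩
  | H =>
    refine sup_le ?_ hCC
    rintro _ ⟨f, rfl⟩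
    exact DHmap_mem_Wn f

theorem CT.grade_of_ne_neg_one (t : CT) (n : ℕ) {j : ℤ} (hj : j ≠ -1) :
    t.grade n j = t.algebra n ⊓ edeg n j := by
  cases t with
  | St => exact if_neg hj
  | _ => rfl

theorem CT.grade_St_neg_one (n : ℕ) : CT.grade .St n (-1) =
    Submodule.span ℂ (Set.range fun i : Fin n => mulOp n (oneM n) * pd n i) := by
  rw [CT.grade]
  exact if_pos rfl

theorem CT.grade_le_algebra (t : CT) (n : ℕ) (j : ℤ) : t.grade n j ≤ t.algebra n := by
  by_cases hj : j = -1
  · subst hj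
    cases t with
    | St =>
      rw [CT.grade_St_neg_one, Submodule.span_le]
      rintro _ ⟨i, rfl⟩
      have h := mulOp_oneM_mul_pd_mem_Stn (pd_mono_of_notMem (Finset.notMem_empty i))
      rwa [mulOp_apply_mono_empty] at h
    | _ => exact inf_le_left
  · exact (t.grade_of_ne_neg_one n hj).trans_le inf_le_left

/-- The element `u` of `Λ(n)` for which `L₋₁` is spanned by the `u∂ᵢ`: it is `1 - x₁⋯xₙ` for
`S̃(n)` and `1` for the other three families. -/
def CT.unit : CT → (n : ℕ) → Lambda n
  | .St, n => oneM n
  | _, n => mono n ∅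

theorem CT.unit_mem_lpar {t : CT} (hSt : t = .St → Even n) : t.unit n ∈ lpar n 0 := by
  have hone : mono n ∅ ∈ lpar n 0 := by simpa using mono_mem_lpar (∅ : Finset (Fin n))
  cases t with
  | St =>
    have htop := mono_mem_lpar (Finset.univ : Finset (Fin n))
    rw [Finset.card_univ, Fintype.card_fin, ZMod.natCast_eq_zero_iff_even.2 (hSt rfl)] at htop
    exact Submodule.sub_mem _ hone htop
  | _ => exact hone

theorem CT.unit_apply_empty_ne_zero (t : CT) (hn : n ≠ 0) : t.unit n ∅ ≠ 0 := by
  have : (∅ : Finset (Fin n)) ≠ Finset.univ := ne_univ_of_card_lt (by simpa using hn.bot_lt)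
  cases t <;> simp [CT.unit, oneM, omegaTop, mono_apply, this]

theorem CT.mulOp_unit_mul_pd_mem_grade (t : CT) (hn : 2 ≤ n) (i : Fin n) :
    mulOp n (t.unit n) * pd n i ∈ t.grade n (-1) := by
  have hdeg : mulOp n (mono n ∅) * pd n i ∈ edeg n (-1) := by
    simpa using mul_mem_edeg (mulOp_mem_edeg (mono_mem_ldeg ∅)) (pd_mem_edeg i)
  cases t with
  | W => exact ⟨mulOp_mul_pd_mem_Wn _ _, hdeg⟩
  | S => exact ⟨mulOp_mul_pd_mem_Sn (pd_mono_of_notMem (Finset.notMem_empty i)), hdeg⟩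
  | St =>
    rw [CT.grade_St_neg_one]
    exact Submodule.subset_span ⟨i, rfl⟩
  | H =>
    refine ⟨?_, hdeg⟩
    change mulOp n (mono n ∅) * pd n i ∈ Hn n
    rw [mulOp_mono_empty, one_mul]
    exact pd_mem_Hn hn i

theorem mulOp_oneM_mono {S : Finset (Fin n)} (hS : S.Nonempty) :
    mulOp n (oneM n) (mono n S) = mono n S := by
  have : mulOp n (omegaTop n) (mono n S) = 0 :=
    mulOp_mono_mono_of_not_disjoint fun h => hS.ne_empty <| by
      rwa [Finset.disjoint_iff_inter_eq_empty, Finset.univ_inter] at h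
  rw [oneM, map_sub, LinearMap.sub_apply, this, mulOp_mono_empty, sub_zero, Module.End.one_apply]

theorem CT.mulOp_mono_singleton_mul_pd_mem_grade {t : CT} (ht : t ≠ .H) {i j : Fin n}
    (hij : i ≠ j) : mulOp n (mono n {i}) * pd n j ∈ t.grade n 0 := by
  have hpd := pd_mono_singleton_of_ne hij.symm
  rw [t.grade_of_ne_neg_one n (by norm_num)]
  refine ⟨?_, by simpa using mul_mem_edeg (mulOp_mem_edeg (mono_mem_ldeg {i})) (pd_mem_edeg j)⟩
  cases t with
  | W => exact mulOp_mul_pd_mem_Wn _ _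
  | S => exact mulOp_mul_pd_mem_Sn hpd
  | St =>
    have h := mulOp_oneM_mul_pd_mem_Stn hpd
    rwa [mulOp_oneM_mono (Finset.singleton_nonempty i)] at h
  | H => exact absurd rfl ht

theorem DHmap_mono_pair_mem_grade (hn : 2 < n) {i j : Fin n} (hij : i ≠ j) :
    DHmap n (mono n {i, j}) ∈ CT.grade .H n 0 := by
  have hcard : ({i, j} : Finset (Fin n)).card = 2 := Finset.card_pair hij
  refine ⟨DHmap_mono_mem_Hn (ne_univ_of_card_lt (by rwa [hcard])), ?_⟩
  simpa [hcard] using DHmap_mem_edeg (mono_mem_ldeg {i, j})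

theorem CT.exists_mem_grade_zero_apply_mono {t : CT} (hn : 2 ≤ n) (hH : t = .H → 2 < n)
    (j : Fin n) : ∃ x ∈ t.grade n 0, ∃ k, ∃ c : ℂ, c ≠ 0 ∧ x (mono n {k}) = c • mono n {j} := by
  have : Nontrivial (Fin n) := Fin.nontrivial_iff_two_le.2 hn
  obtain ⟨i, hij⟩ := exists_ne j
  by_cases ht : t = .H
  · subst ht
    refine ⟨_, DHmap_mono_pair_mem_grade (hH rfl) hij, cidx n i,
      msign ({i, j} : Finset (Fin n)).card * msign (({j} : Finset (Fin n)).filter (· < i)).card,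
      mul_ne_zero (msign_ne_zero _) (msign_ne_zero _), ?_⟩
    rw [DHmap_apply_mono_singleton, par_apply_of_mem_lpar (mono_mem_lpar _), map_smul,
      pd_mono_insert (by simpa using hij), smul_smul, ← msign_eq_sgn]
  · refine ⟨_, CT.mulOp_mono_singleton_mul_pd_mem_grade ht hij.symm, i, 1, one_ne_zero, ?_⟩
    rw [Module.End.mul_apply, pd_mono_singleton_self, mulOp_apply_mono_empty, one_smul]

/-! ### The centralizer of the local part -/

theorem CT.eq_zero_of_sbL_local_eq_zero {t : CT} (hn : 2 ≤ n) (hSt : t = .St → Even n)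
    (hH : t = .H → 2 < n) {D : E n} (hD : D ∈ Wn n)
    (h : ∀ p, ∀ x ∈ (t.grade n (-1) ⊔ t.grade n 0) ⊓ epar n p, sbL n x D = 0) : D = 0 := by
  have hu := CT.unit_mem_lpar hSt
  have hconst := apply_mono_singleton_of_sbL_eq_zero hu
    (t.unit_apply_empty_ne_zero (by omega)) hD fun j =>
      h _ _ ⟨Submodule.mem_sup_left (t.mulOp_unit_mul_pd_mem_grade hn j),
        mul_mem_epar (mulOp_mem_epar hu) (edeg_le_epar _ (pd_mem_edeg j))⟩
  refine eq_zero_of_mem_Wn hD fun j => ?_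
  obtain ⟨x, hx, k, c, hc, hxk⟩ := CT.exists_mem_grade_zero_apply_mono hn hH j
  have hxW : x ∈ Wn n := t.prime_le_Wn n (t.algebra_le_prime n (t.grade_le_algebra n 0 hx))
  have hx₀ : x ∈ epar n 0 := by
    have hdeg := (t.grade_of_ne_neg_one n (by norm_num)).le hx
    simpa using edeg_le_epar _ hdeg.2
  have hDx := apply_eq_zero_of_sbL_eq_zero hxW hx₀ (h 0 x ⟨Submodule.mem_sup_right hx, hx₀⟩)
    (hconst k)
  rw [hxk, map_smul] at hDx
  exact (smul_eq_zero.1 hDx).resolve_left hc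

theorem CT.bounds_of_valid {t : CT} (ht : t.valid n) :
    2 ≤ n ∧ (t = .St → Even n) ∧ (t = .H → 2 < n) := by
  cases t <;> simp only [CT.valid] at ht <;> refine ⟨by omega, ?_, ?_⟩ <;> grind

theorem superBider_vanish_local_general {t : CT} (hn : 2 ≤ n) (hSt : t = .St → Even n)
    (hH : t = .H → 2 < n) {f : E n → E n → E n} {phi psi : E n → E n}
    (hmaps : ∀ x ∈ t.algebra n, phi x ∈ Wn n ∧ psi x ∈ Wn n)
    (hrepr : ∀ x ∈ t.algebra n, ∀ y ∈ t.algebra n,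
      f x y = sbL n (phi x) y ∧ f x y = sbL n x (psi y))
    (hvan : (∀ x ∈ t.grade n (-1) ⊔ t.grade n 0, phi x = 0) ∨
      (∀ x ∈ t.grade n (-1) ⊔ t.grade n 0, psi x = 0)) :
    ∀ x ∈ t.algebra n, ∀ y ∈ t.algebra n, f x y = 0 := by
  have hlocal : t.grade n (-1) ⊔ t.grade n 0 ≤ t.algebra n :=
    sup_le (t.grade_le_algebra n _) (t.grade_le_algebra n _)
  intro x hx y hy
  rcases hvan with hphi | hpsi
  · have hψy : psi y = 0 := by
      refine CT.eq_zero_of_sbL_local_eq_zero hn hSt hH (hmaps y hy).2 fun _ z hz => ?_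
      have hzy := hrepr z (hlocal hz.1) y hy
      rw [← hzy.2, hzy.1, hphi z hz.1, map_zero, LinearMap.zero_apply]
    rw [(hrepr x hx y hy).2, hψy, map_zero]
  · have hφx : phi x = 0 := by
      refine CT.eq_zero_of_sbL_local_eq_zero hn hSt hH (hmaps x hx).1 fun _ z hz => ?_
      have hxz := hrepr x hx z (hlocal hz.1)
      exact sbL_eq_zero_of_swap hz.2 (by rw [← hxz.1, hxz.2, hpsi z hz.1, map_zero])
    rw [(hrepr x hx y hy).1, hφx, map_zero, LinearMap.zero_apply]

end

/-- Let `f` be a homogeneous super-biderivation of a Cartan type Lie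
superalgebra `L` with representing maps `φ_f, ψ_f : L → L'`
(`f(x,y) = [φ_f(x), y] = [x, ψ_f(y)]`). If `φ_f` or `ψ_f` vanishes on
`L_{−1} ⊕ L_0 ⊕ L_1`, then `f` is the zero map. -/
theorem superBider_vanish_local (n : ℕ) (t : CT) (ht : t.valid n)
    (pf : ZMod 2) (f : E n →ₗ[ℂ] E n →ₗ[ℂ] E n)
    (hf : IsSuperBider n (t.algebra n) pf f)
    (phi psi : E n →ₗ[ℂ] E n)
    (hmaps : ∀ x ∈ t.algebra n, phi x ∈ t.prime n ∧ psi x ∈ t.prime n)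
    (hrepr : ∀ x ∈ t.algebra n, ∀ y ∈ t.algebra n,
      f x y = sbL n (phi x) y ∧ f x y = sbL n x (psi y))
    (hvan : (∀ x ∈ t.grade n (-1) ⊔ t.grade n 0 ⊔ t.grade n 1, phi x = 0) ∨
            (∀ x ∈ t.grade n (-1) ⊔ t.grade n 0 ⊔ t.grade n 1, psi x = 0)) :
    ∀ x ∈ t.algebra n, ∀ y ∈ t.algebra n, f x y = 0 := by
  obtain ⟨hn, hSt, hH⟩ := CT.bounds_of_valid ht
  exact superBider_vanish_local_general hn hSt hH
    (fun x hx => (hmaps x hx).imp (t.prime_le_Wn n ·) (t.prime_le_Wn n ·)) hrepr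
    (hvan.imp (fun h x hx => h x (Submodule.mem_sup_left hx))
      fun h x hx => h x (Submodule.mem_sup_left hx))

end CartanSuper
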